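/- Suppose 0 < s ≤ 1 and let g be holomorphic on the unit disc D. Then the Volterra operator T_g maps the Besov space B^1 into Q_s if and only if g ∈ Q_s. -/

import Mathlib

open MeasureTheory Metric Complex Real Filter Set

noncomputable section

/-- `f` is holomorphic on the open unit disc. -/
def HolOn (f : ℂ → ℂ) : Prop := DifferentiableOn ℂ f (Metric.ball (0:ℂ) 1)

/-- The normalized Lebesgue area measure on `ℂ` (so the unit disc has total mass 1). -/
def dA : Measure ℂ := (ENNReal.ofReal π)⁻¹ • volume

/-- Bounded holomorphic functions on the unit disc. -/
def Hinf : Set (ℂ → ℂ) :=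
  {f | HolOn f ∧ ∃ C : ℝ, ∀ z ∈ Metric.ball (0:ℂ) 1, norm (f z) ≤ C}

/-- The Bloch space. -/
def Bloch : Set (ℂ → ℂ) :=
  {f | HolOn f ∧ ∃ C : ℝ, ∀ z ∈ Metric.ball (0:ℂ) 1,
      (1 - norm z ^ 2) * norm (deriv f z) ≤ C}

/-- The little Bloch space: `(1-|z|²)|f'(z)| → 0` as `|z| → 1⁻`. -/
def littleBloch : Set (ℂ → ℂ) :=
  {f | HolOn f ∧ ∀ ε : ℝ, 0 < ε → ∃ r : ℝ, r < 1 ∧ ∀ z ∈ Metric.ball (0:ℂ) 1,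
      r < norm z → (1 - norm z ^ 2) * norm (deriv f z) < ε}

/-- The `α`-logarithmic Bloch space. -/
def BlochLog (α : ℝ) : Set (ℂ → ℂ) :=
  {f | HolOn f ∧ ∃ C : ℝ, ∀ z ∈ Metric.ball (0:ℂ) 1,
      (1 - norm z ^ 2) * (Real.log (2 / (1 - norm z ^ 2))) ^ α *
        norm (deriv f z) ≤ C}

/-- The Besov space `B¹`: holomorphic `f` with `∫_D |f''| dA < ∞`. -/
def Besov1 : Set (ℂ → ℂ) :=
  {f | HolOn f ∧ ∫⁻ z in Metric.ball (0:ℂ) 1,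
      ENNReal.ofReal (norm (deriv (deriv f) z)) ∂dA < ⊤}

/-- The Besov space `Bᵖ` (`1 < p < ∞`): `∫_D (1-|z|)^(p-2) |f'(z)|^p dA(z) < ∞`. -/
def Besov (p : ℝ) : Set (ℂ → ℂ) :=
  {f | HolOn f ∧ ∫⁻ z in Metric.ball (0:ℂ) 1,
      ENNReal.ofReal ((1 - norm z) ^ (p - 2) * norm (deriv f z) ^ p) ∂dA < ⊤}

open scoped Classical in
/-- The Besov space `Bᵖ` for all `1 ≤ p < ∞` (with the special definition at `p = 1`). -/
def BesovFull (p : ℝ) : Set (ℂ → ℂ) := if p = 1 then Besov1 else Besov p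

/-- The Möbius transformation `φ_a(z) = (a-z)/(1 - conj a · z)`. -/
def phi (a z : ℂ) : ℂ := (a - z) / (1 - (starRingEnd ℂ) a * z)

/-- The space `Q_s`. -/
def Qs (s : ℝ) : Set (ℂ → ℂ) :=
  {f | HolOn f ∧ ⨆ a ∈ Metric.ball (0:ℂ) 1, ∫⁻ z in Metric.ball (0:ℂ) 1,
      ENNReal.ofReal (norm (deriv f z) ^ 2 *
        (1 - norm (phi a z) ^ 2) ^ s) ∂dA < ⊤}

/-- The space `Q_{s,log,α}`. -/
def QsLog (s α : ℝ) : Set (ℂ → ℂ) :=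
  {f | HolOn f ∧ ⨆ a ∈ Metric.ball (0:ℂ) 1,
      (ENNReal.ofReal ((Real.log (2 / (1 - norm a))) ^ (2 * α)) *
        ∫⁻ z in Metric.ball (0:ℂ) 1,
          ENNReal.ofReal (norm (deriv f z) ^ 2 *
            (1 - norm (phi a z) ^ 2) ^ s) ∂dA) < ⊤}

/-- The Volterra operator `T_g(f)(z) = ∫_0^z g'(ξ) f(ξ) dξ` (along the segment from 0 to z). -/
def Tg (g f : ℂ → ℂ) : ℂ → ℂ :=
  fun z => z * ∫ t in (0:ℝ)..1, deriv g ((t : ℂ) * z) * f ((t : ℂ) * z)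

/-- The companion operator `I_g(f)(z) = ∫_0^z g(ξ) f'(ξ) dξ` (along the segment from 0 to z). -/
def Ig (g f : ℂ → ℂ) : ℂ → ℂ :=
  fun z => z * ∫ t in (0:ℝ)..1, g ((t : ℂ) * z) * deriv f ((t : ℂ) * z)

/-- The multiplication operator `M_g(f) = g · f`. -/
def Mg (g f : ℂ → ℂ) : ℂ → ℂ := fun z => g z * f z

/-- `T` maps `X` into `Y`. -/
def MapsInto (T : (ℂ → ℂ) → (ℂ → ℂ)) (X Y : Set (ℂ → ℂ)) : Prop :=
  ∀ f ∈ X, T f ∈ Y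

/-- The Hardy space `H^q`. -/
def Hardy (q : ℝ) : Set (ℂ → ℂ) :=
  {f | HolOn f ∧ ∃ C : ℝ, ∀ r : ℝ, 0 < r → r < 1 →
      (1 / (2 * π)) * ∫ t in (0:ℝ)..(2 * π),
        norm (f ((r : ℂ) * Complex.exp ((t : ℂ) * Complex.I))) ^ q ≤ C}

/-- An inner function: bounded holomorphic with radial boundary values of modulus 1 a.e. -/
def IsInner (g : ℂ → ℂ) : Prop :=
  g ∈ Hinf ∧ ∀ᵐ t : ℝ ∂(volume.restrict (Set.Ioc (0:ℝ) (2 * π))),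
    Filter.Tendsto (fun r : ℝ => norm (g ((r : ℂ) * Complex.exp ((t : ℂ) * Complex.I))))
      (nhdsWithin 1 (Set.Iio 1)) (nhds 1)

/-- `X` has the f-property (division by inner functions). -/
def FProperty (X : Set (ℂ → ℂ)) : Prop :=
  ∀ h ∈ X, ∀ g : ℂ → ℂ, IsInner g →
    (fun z => h z / g z) ∈ Hardy 1 → (fun z => h z / g z) ∈ X

/-- The space of multipliers `M(X,Y)`. -/
def Mult (X Y : Set (ℂ → ℂ)) : Set (ℂ → ℂ) :=
  {g | HolOn g ∧ ∀ f ∈ X, (fun z => g z * f z) ∈ Y}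

end

/-! Since `(T_g f)' = g' f` on `D`, the choice `f = 1 ∈ B¹` gives `g ∈ Q_s`, while boundedness of
`f` gives `T_g f ∈ Q_s` for every `g ∈ Q_s`; so everything rests on the embedding `B¹ ⊆ H^∞`.

For the embedding, Taylor's formula reads
`f(z) = f(0) + z f'(0) + z² ∫₀¹ (1 - t) f''(tz) dt`. Substitute `t = r²`: as `|r²z| ≤ r²` has
distance at least `r(1 - r)` from the circle `|w| = r`, Cauchy's formula on that circle bounds
`(1 - r²) |f''(r²z)|` by twice the average of `|f''|` over it. Integrated against `2r dr`, the
averages make up the area integral of `|f''|` over `D`. -/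

section Segment

variable {E : Type*} [NormedAddCommGroup E] [NormedSpace ℂ E] {U : Set ℂ} {z : ℂ}

lemma ofReal_mul_mem_of_starConvex (hU : StarConvex ℝ 0 U) (hz : z ∈ U) {t : ℝ}
    (ht : t ∈ Icc (0 : ℝ) 1) : (t : ℂ) * z ∈ U := by
  simpa only [real_smul] using hU.smul_mem hz ht.1 ht.2

lemma integral_segment_eq_sub [CompleteSpace E] {F F' : ℂ → E} (hU : StarConvex ℝ 0 U)
    (hF : ∀ w ∈ U, HasDerivAt F (F' w) w) (hF' : ContinuousOn F' U) (hz : z ∈ U) :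
    z • ∫ t in (0 : ℝ)..1, F' ((t : ℂ) * z) = F z - F 0 := by
  have hmem : ∀ t ∈ Icc (0 : ℝ) 1, (t : ℂ) * z ∈ U :=
    fun _ ht ↦ ofReal_mul_mem_of_starConvex hU hz ht
  have hcont : ContinuousOn (fun t : ℝ ↦ F' ((t : ℂ) * z)) (Icc 0 1) :=
    hF'.comp (by fun_prop) hmem
  simpa using intervalIntegral.integral_unitInterval_deriv_eq_sub (z₀ := 0) (z₁ := z)
    (by simpa using hcont) (fun t ht ↦ by simpa using hF _ (hmem t ht))

lemma eq_add_integral_segment_deriv_deriv [CompleteSpace E] {f : ℂ → E} (hUo : IsOpen U)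
    (hU : StarConvex ℝ 0 U) (hf : DifferentiableOn ℂ f U) (hz : z ∈ U) :
    f z = f 0 + z • deriv f 0 +
      z ^ 2 • ∫ t in (0 : ℝ)..1, (1 - t) • deriv (deriv f) ((t : ℂ) * z) := by
  have hf' : DifferentiableOn ℂ (deriv f) U := hf.deriv hUo
  -- As a function of the base point `w`, the first Taylor polynomial at `z` telescopes.
  have hF : ∀ w ∈ U, HasDerivAt (fun w ↦ f w + (z - w) • deriv f w)
      ((z - w) • deriv (deriv f) w) w := fun w hw ↦ by
    have h₁ := (hf.differentiableAt (hUo.mem_nhds hw)).hasDerivAt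
    have h₂ := (hf'.differentiableAt (hUo.mem_nhds hw)).hasDerivAt
    exact (h₁.add (((hasDerivAt_id w).const_sub z).smul h₂)).congr_deriv (by simp)
  have hcont : ContinuousOn (fun w ↦ (z - w) • deriv (deriv f) w) U :=
    (continuousOn_const.sub continuousOn_id).smul (hf'.deriv hUo).continuousOn
  have hremainder : z • ∫ t in (0 : ℝ)..1, (z - t * z) • deriv (deriv f) ((t : ℂ) * z) =
      z ^ 2 • ∫ t in (0 : ℝ)..1, (1 - t) • deriv (deriv f) ((t : ℂ) * z) := by
    rw [pow_two, mul_smul]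
    congr 1
    rw [← intervalIntegral.integral_smul]
    refine intervalIntegral.integral_congr fun t _ ↦ ?_
    simp only [← Complex.coe_smul, smul_smul]
    congr 1
    push_cast
    ring
  rw [← hremainder, integral_segment_eq_sub hU hF hcont hz]
  simp

end Segment

section CircleAverage

variable {E : Type*} [NormedAddCommGroup E] {c : ℂ} {R : ℝ}

lemma norm_circleAverage_le_circleAverage_norm [NormedSpace ℝ E] {f : ℂ → E} :
    ‖circleAverage f c R‖ ≤ circleAverage (fun z ↦ ‖f z‖) c R := by
  rw [circleAverage_def, circleAverage_def, norm_smul, smul_eq_mul,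
    Real.norm_of_nonneg (by positivity)]
  gcongr
  exact intervalIntegral.norm_integral_le_integral_norm two_pi_pos.le

lemma norm_le_mul_circleAverage_norm [NormedSpace ℂ E] [CompleteSpace E] {f : ℂ → E} {w : ℂ}
    (hf : DiffContOnCl ℂ f (ball c R)) (hw : w ∈ ball c R) :
    ‖f w‖ ≤ R / (R - ‖w - c‖) * circleAverage (fun z ↦ ‖f z‖) c R := by
  have hwR : ‖w - c‖ < R := mem_ball_iff_norm.mp hw
  have hR : 0 < R := (norm_nonneg _).trans_lt hwR
  rw [← abs_of_pos hR] at hf hw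
  have hfcont : ContinuousOn f (sphere c |R|) :=
    hf.continuousOn_ball.mono sphere_subset_closedBall
  have hdist : ∀ z ∈ sphere c |R|, R - ‖w - c‖ ≤ ‖z - w‖ := fun z hz ↦ by
    have hzR : ‖z - c‖ = R := by rw [mem_sphere_iff_norm.mp hz, abs_of_pos hR]
    simpa [hzR] using norm_sub_norm_le (z - c) (w - c)
  have hne : ∀ z ∈ sphere c |R|, z - w ≠ 0 := fun z hz ↦
    norm_pos_iff.mp ((sub_pos.mpr hwR).trans_le (hdist z hz))
  calc ‖f w‖ = ‖circleAverage (fun z ↦ ((z - c) / (z - w)) • f z) c R‖ := by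
        rw [hf.circleAverage_smul_div hw]
    _ ≤ circleAverage (fun z ↦ ‖((z - c) / (z - w)) • f z‖) c R :=
        norm_circleAverage_le_circleAverage_norm
    _ ≤ circleAverage (fun z ↦ R / (R - ‖w - c‖) * ‖f z‖) c R := by
        refine circleAverage_mono (ContinuousOn.circleIntegrable' ?_)
          (ContinuousOn.circleIntegrable' (continuousOn_const.mul hfcont.norm)) fun z hz ↦ ?_
        · exact (((continuousOn_id.sub continuousOn_const).div
            (continuousOn_id.sub continuousOn_const) hne).smul hfcont).norm
        · rw [norm_smul, norm_div, mem_sphere_iff_norm.mp hz, abs_of_pos hR]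
          gcongr
          exact hdist z hz
    _ = R / (R - ‖w - c‖) * circleAverage (fun z ↦ ‖f z‖) c R :=
        circleAverage_fun_smul (a := R / (R - ‖w - c‖))

lemma circleAverage_eq_integral_neg_pi_pi [NormedSpace ℝ E] {f : ℂ → E} :
    circleAverage f c R = (2 * π)⁻¹ • ∫ θ in (-π)..π, f (circleMap c R θ) := by
  have hshift := ((periodic_circleMap c R).comp f).intervalIntegral_add_eq 0 (-π)
  rw [zero_add, show -π + 2 * π = π by ring] at hshift
  exact congrArg ((2 * π)⁻¹ • ·) hshift

lemma ofReal_two_pi_mul_circleAverage_norm {f : ℂ → E} (hf : CircleIntegrable f c R) :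
    ENNReal.ofReal (2 * π * circleAverage (fun z ↦ ‖f z‖) c R) =
      ∫⁻ θ in Ioo (-π) π, ‖f (circleMap c R θ)‖ₑ := by
  have hπ : -π ≤ π := neg_le_self pi_pos.le
  have hint : IntegrableOn (fun θ ↦ f (circleMap c R θ)) (Ioo (-π) π) :=
    (intervalIntegrable_iff_integrableOn_Ioo_of_le hπ).mp
      (((periodic_circleMap c R).comp f).intervalIntegrable₀ two_pi_pos.ne' hf (-π) π)
  rw [circleAverage_eq_integral_neg_pi_pi, smul_eq_mul, mul_inv_cancel_left₀ two_pi_pos.ne',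
    intervalIntegral.integral_of_le hπ, integral_Ioc_eq_integral_Ioo,
    ofReal_integral_norm_eq_lintegral_enorm hint]

end CircleAverage

section Polar

lemma polarCoord_symm_eq_circleMap (r θ : ℝ) :
    Complex.polarCoord.symm (r, θ) = circleMap 0 r θ := by
  simp [Complex.polarCoord_symm_apply, circleMap, Complex.exp_mul_I]

lemma setLIntegral_ball_eq_polar {F : ℂ → ENNReal} (hF : Measurable F) (c : ℂ) (R : ℝ) :
    ∫⁻ z in ball c R, F z =
      ∫⁻ r in Ioo 0 R, ENNReal.ofReal r * ∫⁻ θ in Ioo (-π) π, F (circleMap c r θ) := by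
  set G : ℂ → ENNReal := fun z ↦ (ball c R).indicator F (c + z)
  have hG : Measurable G := (hF.indicator measurableSet_ball).comp (measurable_const_add c)
  have hpolar : Measurable fun p : ℝ × ℝ ↦ ENNReal.ofReal p.1 * G (Complex.polarCoord.symm p) := by
    simp only [Complex.polarCoord_symm_apply]
    fun_prop
  have hGcircle : ∀ r θ, 0 < r → G (circleMap 0 r θ) =
      (Iio R).indicator (fun r ↦ F (circleMap c r θ)) r := fun r θ hr ↦ by
    have hadd : c + circleMap 0 r θ = circleMap c r θ := by simp [circleMap]
    simp [G, hadd, Set.indicator, abs_of_pos hr]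
  calc ∫⁻ z in ball c R, F z = ∫⁻ z, G z := by
        rw [← lintegral_indicator measurableSet_ball, lintegral_add_left_eq_self]
    _ = ∫⁻ r in Ioi 0, ∫⁻ θ in Ioo (-π) π, ENNReal.ofReal r * G (circleMap 0 r θ) := by
        rw [← Complex.lintegral_comp_polarCoord_symm, polarCoord_target,
          Measure.volume_eq_prod]
        simp only [smul_eq_mul]
        rw [setLIntegral_prod _ hpolar.aemeasurable]
        simp only [polarCoord_symm_eq_circleMap]
    _ = ∫⁻ r in Ioi 0, (Iio R).indicator (fun r ↦ ENNReal.ofReal r *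
          ∫⁻ θ in Ioo (-π) π, F (circleMap c r θ)) r := by
        refine setLIntegral_congr_fun measurableSet_Ioi fun r hr ↦ ?_
        rw [lintegral_const_mul' _ _ ENNReal.ofReal_ne_top]
        simp only [hGcircle r _ hr]
        by_cases hrR : r ∈ Iio R <;> simp [hrR]
    _ = _ := by rw [setLIntegral_indicator measurableSet_Iio, Iio_inter_Ioi]

lemma setLIntegral_ball_dA_eq_circleAverage {E : Type*} [NormedAddCommGroup E]
    {h : ℂ → E} {R : ℝ} (hh : ContinuousOn h (ball 0 R)) :
    ∫⁻ z in ball 0 R, ‖h z‖ₑ ∂dA =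
      ∫⁻ r in Ioo 0 R, ENNReal.ofReal (2 * r * circleAverage (fun z ↦ ‖h z‖) 0 r) := by
  have hmeas : Measurable ((ball 0 R).indicator fun z ↦ ‖h z‖ₑ) := by
    classical
    rw [← Set.piecewise_eq_indicator]
    exact (continuous_enorm.comp_continuousOn hh).measurable_piecewise continuousOn_const
      measurableSet_ball
  have hcircle : ∀ r ∈ Ioo 0 R, ∀ θ, circleMap 0 r θ ∈ ball 0 R := fun r hr θ ↦ by
    simpa [abs_of_pos hr.1] using hr.2
  rw [dA, Measure.restrict_smul, lintegral_smul_measure, smul_eq_mul,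
    ← setLIntegral_congr_fun measurableSet_ball fun z hz ↦ indicator_of_mem hz fun z ↦ ‖h z‖ₑ,
    setLIntegral_ball_eq_polar hmeas, ← lintegral_const_mul' _ _ (by simp [pi_pos])]
  refine setLIntegral_congr_fun measurableSet_Ioo fun r hr ↦ ?_
  have hint : CircleIntegrable h 0 r := ContinuousOn.circleIntegrable hr.1.le
    (hh.mono (sphere_subset_ball hr.2))
  simp only [indicator_of_mem (hcircle r hr _)]
  rw [← ofReal_two_pi_mul_circleAverage_norm hint, ← ENNReal.ofReal_inv_of_pos pi_pos,
    ← ENNReal.ofReal_mul hr.1.le, ← ENNReal.ofReal_mul (by positivity)]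
  congr 1
  field_simp

end Polar

section Radial

variable {E : Type*} [NormedAddCommGroup E] [NormedSpace ℂ E] [CompleteSpace E] {h : ℂ → E}
  {z : ℂ}

lemma one_sub_sq_mul_norm_le_circleAverage (hh : DifferentiableOn ℂ h (ball 0 1)) (hz : ‖z‖ ≤ 1)
    {r : ℝ} (hr : r ∈ Ioo (0 : ℝ) 1) :
    (1 - r ^ 2) * ‖h ((r ^ 2 : ℝ) * z)‖ ≤ 2 * circleAverage (fun w ↦ ‖h w‖) 0 r := by
  obtain ⟨hr₀, hr₁⟩ := hr
  set w : ℂ := (r ^ 2 : ℝ) * z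
  have hw : ‖w‖ ≤ r ^ 2 := by
    rw [norm_mul, Complex.norm_real, Real.norm_of_nonneg (by positivity)]
    exact mul_le_of_le_one_right (by positivity) hz
  have hwr : ‖w‖ < r := hw.trans_lt (by nlinarith)
  have hdiff : DiffContOnCl ℂ h (ball 0 r) :=
    (hh.mono (closedBall_subset_ball hr₁)).diffContOnCl_ball subset_rfl
  have havg : 0 ≤ circleAverage (fun w ↦ ‖h w‖) 0 r :=
    circleAverage_nonneg_of_nonneg fun _ _ ↦ norm_nonneg _
  have hkernel : (1 - r ^ 2) * (r / (r - ‖w‖)) ≤ 2 := by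
    rw [← mul_div_assoc, div_le_iff₀ (by linarith)]
    nlinarith
  calc (1 - r ^ 2) * ‖h w‖
      ≤ (1 - r ^ 2) * (r / (r - ‖w‖) * circleAverage (fun w ↦ ‖h w‖) 0 r) := by
        gcongr
        · nlinarith
        · simpa using norm_le_mul_circleAverage_norm hdiff (mem_ball_zero_iff.mpr hwr)
    _ = (1 - r ^ 2) * (r / (r - ‖w‖)) * circleAverage (fun w ↦ ‖h w‖) 0 r := by ring
    _ ≤ 2 * circleAverage (fun w ↦ ‖h w‖) 0 r := by gcongr

lemma setLIntegral_Ioo_comp_sq (F : ℝ → ENNReal) {R : ℝ} (hR : 0 ≤ R) :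
    ∫⁻ t in Ioo 0 (R ^ 2), F t = ∫⁻ r in Ioo 0 R, ENNReal.ofReal (2 * r) * F (r ^ 2) := by
  have hinj : InjOn (fun r : ℝ ↦ r ^ 2) (Ioo 0 R) := fun x hx y hy hxy ↦
    (sq_eq_sq₀ hx.1.le hy.1.le).mp hxy
  have himage : (fun r : ℝ ↦ r ^ 2) '' Ioo 0 R = Ioo 0 (R ^ 2) := by
    refine Subset.antisymm ?_ fun t ht ↦ ⟨√t, ⟨sqrt_pos.mpr ht.1, ?_⟩, sq_sqrt ht.1.le⟩
    · rintro _ ⟨r, hr, rfl⟩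
      exact ⟨pow_pos hr.1 2, pow_lt_pow_left₀ hr.2 hr.1.le two_ne_zero⟩
    · exact (sqrt_lt_sqrt ht.1.le ht.2).trans_eq (sqrt_sq hR)
  rw [← himage, lintegral_image_eq_lintegral_abs_deriv_mul measurableSet_Ioo
    (fun r _ ↦ (hasDerivAt_pow 2 r).hasDerivWithinAt) hinj]
  refine setLIntegral_congr_fun measurableSet_Ioo fun r hr ↦ ?_
  simp [abs_of_pos hr.1]

lemma lintegral_radius_one_sub_mul_enorm_le (hh : DifferentiableOn ℂ h (ball 0 1))
    (hz : ‖z‖ ≤ 1) :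
    ∫⁻ t in Ioo (0 : ℝ) 1, ‖(1 - t) • h (t * z)‖ₑ ≤ 2 * ∫⁻ w in ball 0 1, ‖h w‖ₑ ∂dA := by
  have hsq := setLIntegral_Ioo_comp_sq (fun t ↦ ‖(1 - t) • h (t * z)‖ₑ) zero_le_one
  rw [one_pow] at hsq
  rw [hsq, setLIntegral_ball_dA_eq_circleAverage hh.continuousOn,
    ← lintegral_const_mul' _ _ ENNReal.ofNat_ne_top]
  refine setLIntegral_mono' measurableSet_Ioo fun r hr ↦ ?_
  have hr₁ : 0 ≤ 1 - r ^ 2 := by nlinarith [hr.1, hr.2]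
  rw [← ofReal_norm, norm_smul, Real.norm_of_nonneg hr₁,
    ← ENNReal.ofReal_mul (by linarith [hr.1]), ← ENNReal.ofReal_ofNat,
    ← ENNReal.ofReal_mul zero_le_two]
  refine ENNReal.ofReal_le_ofReal ?_
  calc 2 * r * ((1 - r ^ 2) * ‖h ((r ^ 2 : ℝ) * z)‖)
      ≤ 2 * r * (2 * circleAverage (fun w ↦ ‖h w‖) 0 r) := by
        refine mul_le_mul_of_nonneg_left ?_ (by linarith [hr.1])
        exact one_sub_sq_mul_norm_le_circleAverage hh hz hr
    _ = 2 * (2 * r * circleAverage (fun w ↦ ‖h w‖) 0 r) := by ring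

lemma enorm_le_add_lintegral_deriv_deriv {f : ℂ → E} (hf : DifferentiableOn ℂ f (ball 0 1))
    (hz : z ∈ ball 0 1) :
    ‖f z‖ₑ ≤ ‖f 0‖ₑ + ‖deriv f 0‖ₑ + 2 * ∫⁻ w in ball 0 1, ‖deriv (deriv f) w‖ₑ ∂dA := by
  have hz₁ : ‖z‖ ≤ 1 := (mem_ball_zero_iff.mp hz).le
  have hz₁' : ‖z‖ₑ ≤ 1 := by rwa [← ofReal_norm, ENNReal.ofReal_le_one]
  have hf'' : DifferentiableOn ℂ (deriv (deriv f)) (ball 0 1) :=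
    (hf.deriv isOpen_ball).deriv isOpen_ball
  have hremainder : ‖∫ t in (0 : ℝ)..1, (1 - t) • deriv (deriv f) (t * z)‖ₑ ≤
      2 * ∫⁻ w in ball 0 1, ‖deriv (deriv f) w‖ₑ ∂dA := by
    rw [intervalIntegral.integral_of_le zero_le_one, integral_Ioc_eq_integral_Ioo]
    exact (enorm_integral_le_lintegral_enorm _).trans
      (lintegral_radius_one_sub_mul_enorm_le hf'' hz₁)
  rw [eq_add_integral_segment_deriv_deriv isOpen_ball
    ((convex_ball 0 1).starConvex (mem_ball_self one_pos)) hf hz]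
  refine (enorm_add_le _ _).trans (add_le_add ((enorm_add_le _ _).trans ?_) ?_)
  · rw [enorm_smul]
    gcongr
    exact mul_le_of_le_one_left' hz₁'
  · rw [enorm_smul, enorm_pow]
    exact (mul_le_of_le_one_left' (pow_le_one' hz₁' 2)).trans hremainder

end Radial

lemma one_mem_Besov1 : 1 ∈ Besov1 :=
  ⟨differentiableOn_const 1, by simp⟩

lemma Besov1_subset_Hinf : Besov1 ⊆ Hinf := by
  rintro f ⟨hf, hfin⟩
  simp only [ofReal_norm] at hfin
  refine ⟨hf, (‖f 0‖ₑ + ‖deriv f 0‖ₑ +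
    2 * ∫⁻ w in ball 0 1, ‖deriv (deriv f) w‖ₑ ∂dA).toReal, fun z hz ↦ ?_⟩
  rw [← toReal_enorm]
  refine ENNReal.toReal_mono ?_ (enorm_le_add_lintegral_deriv_deriv hf hz)
  exact ENNReal.add_ne_top.mpr ⟨by simp, ENNReal.mul_ne_top ENNReal.ofNat_ne_top hfin.ne⟩

section Volterra

variable {f g : ℂ → ℂ} {s : ℝ}

lemma hasDerivAt_Tg (hg : HolOn g) (hf : HolOn f) {z : ℂ} (hz : z ∈ ball 0 1) :
    HasDerivAt (Tg g f) (deriv g z * f z) z := by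
  have hgf : DifferentiableOn ℂ (fun w ↦ deriv g w * f w) (ball 0 1) :=
    (hg.deriv isOpen_ball).mul hf
  obtain ⟨F, hF⟩ := hgf.isExactOn_ball
  have hTg : EqOn (Tg g f) (fun w ↦ F w - F 0) (ball 0 1) := fun w hw ↦
    integral_segment_eq_sub ((convex_ball 0 1).starConvex (mem_ball_self one_pos)) hF
      hgf.continuousOn hw
  exact ((hF z hz).sub_const _).congr_of_eventuallyEq
    (hTg.eventuallyEq_of_mem (isOpen_ball.mem_nhds hz))

lemma holOn_Tg (hg : HolOn g) (hf : HolOn f) : HolOn (Tg g f) :=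
  fun _ hz ↦ (hasDerivAt_Tg hg hf hz).differentiableAt.differentiableWithinAt

lemma mem_Qs_of_norm_deriv_le {C : ℝ} (hf : HolOn f) (hg : g ∈ Qs s)
    (hfg : ∀ z ∈ ball 0 1, ‖deriv f z‖ ≤ C * ‖deriv g z‖) : f ∈ Qs s := by
  refine ⟨hf, lt_of_le_of_lt ?_ (ENNReal.mul_lt_top (ENNReal.ofReal_lt_top (r := C ^ 2)) hg.2)⟩
  simp only [ENNReal.mul_iSup]
  refine iSup₂_mono fun a _ ↦ ?_
  rw [← lintegral_const_mul' _ _ ENNReal.ofReal_ne_top]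
  refine setLIntegral_mono' measurableSet_ball fun z hz ↦ ?_
  rw [ENNReal.ofReal_mul (sq_nonneg ‖deriv f z‖), ENNReal.ofReal_mul (sq_nonneg ‖deriv g z‖),
    ← mul_assoc, ← ENNReal.ofReal_mul (sq_nonneg C), ← mul_pow]
  gcongr
  exact hfg z hz

lemma Tg_mem_Qs_of_mem_Hinf (hg : g ∈ Qs s) (hf : f ∈ Hinf) : Tg g f ∈ Qs s := by
  obtain ⟨hf, C, hC⟩ := hf
  refine mem_Qs_of_norm_deriv_le (C := C) (holOn_Tg hg.1 hf) hg fun z hz ↦ ?_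
  rw [(hasDerivAt_Tg hg.1 hf hz).deriv, norm_mul, mul_comm]
  gcongr
  exact hC z hz

lemma mem_Qs_of_Tg_one_mem (hg : HolOn g) (h : Tg g 1 ∈ Qs s) : g ∈ Qs s := by
  refine mem_Qs_of_norm_deriv_le (C := 1) hg h fun z hz ↦ ?_
  simp [(hasDerivAt_Tg hg one_mem_Besov1.1 hz).deriv]

end Volterra

theorem stmt5_general (s : ℝ) {g : ℂ → ℂ} (hg : HolOn g) :
    MapsInto (Tg g) Besov1 (Qs s) ↔ g ∈ Qs s :=
  ⟨fun h ↦ mem_Qs_of_Tg_one_mem hg (h _ one_mem_Besov1),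
    fun h _ hf ↦ Tg_mem_Qs_of_mem_Hinf h (Besov1_subset_Hinf hf)⟩

/-- For `0 < s ≤ 1` and `g` holomorphic on the unit disc, `T_g` maps `B¹`
into `Q_s` iff `g ∈ Q_s`. -/
theorem stmt5 (s : ℝ) (hs0 : 0 < s) (hs1 : s ≤ 1) (g : ℂ → ℂ) (hg : HolOn g) :
    MapsInto (Tg g) Besov1 (Qs s) ↔ g ∈ Qs s :=
  stmt5_general s hg
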